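/- Every symmetric unimodal probability distribution on ℝ supported in [−2a, 2a] with a density can be represented as the distribution of U₁ + U₂ where U₁ and U₂ are each uniformly distributed on [−a, a] with some joint dependence structure (copula). In particular, for density version: if μ is a symmetric (about 0) unimodal probability measure on [−2a,2a], then there exist random variables U₁, U₂, each uniform on [−a,a], with U₁ + U₂ ∼ μ. -/

import Mathlib

open MeasureTheory

/-- The uniform probability measure on `[-a, a]`. -/
noncomputable def unif (a : ℝ) : Measure ℝ :=
  (ENNReal.ofReal (2 * a))⁻¹ • volume.restrict (Set.Icc (-a) a)

open Set in
lemma aux_L (α β p q : ℝ) (hα : 0 ≤ α) (φ : ℝ → ENNReal) (_hpq : p ≤ q) (hφ : Measurable φ) :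
    ENNReal.ofReal α * ∫⁻ t in Icc p q, φ (α * t + β) =
      ∫⁻ x in Icc (α * p + β) (α * q + β), φ x := by
  rcases hα.eq_or_lt with rfl | h
  · simp
  · have := lintegral_image_eq_lintegral_abs_deriv_mul (s := Icc p q) (f := fun t => α * t + β)
      (f' := fun _ => α) measurableSet_Icc
      (fun x _ => by
        simpa using (((hasDerivAt_id x).const_mul α).add_const β).hasDerivWithinAt)
      (fun x _ y _ hxy => by simpa [h.ne'] using hxy) φ
    have e : (fun t => α * t + β) '' Icc p q = Icc (α * p + β) (α * q + β) := by
      ext y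
      simp only [mem_image, mem_Icc]
      constructor
      · rintro ⟨t, ⟨h1, h2⟩, rfl⟩
        constructor <;> nlinarith
      · rintro ⟨h1, h2⟩
        refine ⟨(y - β) / α, ⟨?_, ?_⟩, by field_simp; ring⟩
        · rw [le_div_iff₀ h]; linarith
        · rw [div_le_iff₀ h]; linarith
    rw [e] at this
    rw [this, lintegral_const_mul _ (by fun_prop), abs_of_pos h]

open Set in
lemma aux_L' (α β p q : ℝ) (hα : 0 ≤ α) (φ : ℝ → ENNReal) (_hpq : p ≤ q) (hφ : Measurable φ) :
    ENNReal.ofReal α * ∫⁻ t in Icc p q, φ (-α * t + β) =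
      ∫⁻ x in Icc (-α * q + β) (-α * p + β), φ x := by
  rcases hα.eq_or_lt with rfl | h
  · simp
  · have := lintegral_image_eq_lintegral_abs_deriv_mul (s := Icc p q) (f := fun t => -α * t + β)
      (f' := fun _ => -α) measurableSet_Icc
      (fun x _ => by
        simpa using (((hasDerivAt_id x).const_mul (-α)).add_const β).hasDerivWithinAt)
      (fun x _ y _ hxy => by simpa [h.ne'] using hxy) φ
    have e : (fun t => -α * t + β) '' Icc p q = Icc (-α * q + β) (-α * p + β) := by
      ext y
      simp only [mem_image, mem_Icc]
      constructor
      · rintro ⟨t, ⟨h1, h2⟩, rfl⟩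
        constructor <;> nlinarith
      · rintro ⟨h1, h2⟩
        refine ⟨(β - y) / α, ⟨?_, ?_⟩, by field_simp; ring⟩
        · rw [le_div_iff₀ h]; linarith
        · rw [div_le_iff₀ h]; linarith
    rw [e] at this
    rw [this, lintegral_const_mul _ (by fun_prop), abs_neg, abs_of_pos h]

open Set in
lemma aux_glue (p q r : ℝ) (hpq : p ≤ q) (hqr : q ≤ r) (φ : ℝ → ENNReal) :
    ∫⁻ x in Icc p r, φ x = (∫⁻ x in Icc p q, φ x) + ∫⁻ x in Icc q r, φ x := by
  rw [← Icc_union_Ioc_eq_Icc hpq hqr, lintegral_union measurableSet_Ioc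
    (Set.disjoint_left.2 fun x hx hy => absurd hx.2 (not_le.2 hy.1)),
    setLIntegral_congr (Ioc_ae_eq_Icc (a := q) (b := r))]

instance unif_one_prob : IsProbabilityMeasure (unif 1) := by
  constructor
  simp only [unif, Measure.smul_apply, Measure.restrict_apply_univ, Real.volume_Icc, smul_eq_mul]
  norm_num
  exact ENNReal.inv_mul_cancel (by simp) (by simp)

lemma lint_unif_one (φ : ℝ → ENNReal) :
    ∫⁻ t, φ t ∂(unif 1) = 2⁻¹ * ∫⁻ t in Set.Icc (-1) 1, φ t := by
  simp [unif, lintegral_smul_measure]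

lemma unif_eq_map (r : ℝ) (hr : 0 < r) : unif r = (unif 1).map (fun t => r * t) := by
  refine Measure.ext_of_lintegral _ fun φ hφ => ?_
  rw [lintegral_map hφ (by fun_prop), lint_unif_one, unif, lintegral_smul_measure]
  have := aux_L r 0 (-1) 1 hr.le φ (by norm_num) hφ
  simp only [add_zero, mul_neg, mul_one] at this
  rw [← this, smul_eq_mul, ← mul_assoc, ENNReal.ofReal_mul (by norm_num),
    ENNReal.mul_inv (by simp) (by simp), mul_assoc (ENNReal.ofReal 2)⁻¹,
    ENNReal.inv_mul_cancel (by simpa using hr) (by simp)]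
  simp

/-- mixture of centered uniforms -/
noncomputable def mixU (ρ : Measure ℝ) : Measure ℝ :=
  (ρ.prod (unif 1)).map (fun p => p.1 * p.2)

lemma lint_mixU (ρ : Measure ℝ) [SFinite ρ] (φ : ℝ → ENNReal) (hφ : Measurable φ) :
    ∫⁻ x, φ x ∂(mixU ρ) = ∫⁻ c, ∫⁻ t, φ (c * t) ∂(unif 1) ∂ρ := by
  rw [mixU, lintegral_map hφ (by fun_prop), lintegral_prod _ (by fun_prop)]

def URep (a : ℝ) (ρ : Measure ℝ) : Prop :=
  ∃ ν : Measure (ℝ × ℝ), ν.map Prod.fst = ρ Set.univ • unif a ∧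
    ν.map Prod.snd = ρ Set.univ • unif a ∧ ν.map (fun p => p.1 + p.2) = mixU ρ

lemma base_key (r c : ℝ) (hr : 0 < r) (hc : c ∈ Set.Icc r (2 * r)) :
    ENNReal.ofReal (c / r - 1) + 2 * ENNReal.ofReal (1 - c / (2 * r)) = 1 := by
  have h1 : 1 ≤ c / r := by rw [le_div_iff₀ hr]; linarith [hc.1]
  have h2 : c / (2 * r) ≤ 1 := by rw [div_le_iff₀ (by linarith)]; linarith [hc.2]
  rw [show (2 : ENNReal) = ENNReal.ofReal 2 by simp, ← ENNReal.ofReal_mul (by norm_num),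
    ← ENNReal.ofReal_add (by linarith) (by linarith)]
  rw [show c / r - 1 + 2 * (1 - c / (2 * r)) = 1 by field_simp; ring]
  simp

lemma base_sum (r c : ℝ) (hr : 0 < r) (hc : c ∈ Set.Icc r (2 * r)) (φ : ℝ → ENNReal)
    (hφ : Measurable φ) :
    ENNReal.ofReal (c / r - 1) * ∫⁻ t, φ (r * t + (c - r) * t) ∂(unif 1) +
    ENNReal.ofReal (1 - c / (2 * r)) *
      (∫⁻ t, φ (r * t + ((c / 2 - r) * t + c / 2)) ∂(unif 1)) +
    ENNReal.ofReal (1 - c / (2 * r)) *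
      (∫⁻ t, φ (r * t + ((c / 2 - r) * t - c / 2)) ∂(unif 1)) = ∫⁻ t, φ (c * t) ∂(unif 1) := by
  have e1 : ∫⁻ t, φ (r * t + (c - r) * t) ∂(unif 1) = ∫⁻ t, φ (c * t) ∂(unif 1) := by
    congr 1; ext t; congr 1; ring
  have e2 : (∫⁻ t, φ (r * t + ((c / 2 - r) * t + c / 2)) ∂(unif 1)) +
      (∫⁻ t, φ (r * t + ((c / 2 - r) * t - c / 2)) ∂(unif 1)) =
      2 * ∫⁻ t, φ (c * t) ∂(unif 1) := by
    have h1 := aux_L (1/2) (1/2) (-1) 1 (by norm_num) (fun x => φ (c * x)) (by norm_num)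
      (by fun_prop)
    have h2 := aux_L (1/2) (-1/2) (-1) 1 (by norm_num) (fun x => φ (c * x)) (by norm_num)
      (by fun_prop)
    have h3 := aux_glue (-1) 0 1 (by norm_num) (by norm_num) (fun x => φ (c * x))
    norm_num at h1 h2
    have hhalf : ENNReal.ofReal (1/2) = 2⁻¹ := by
      rw [one_div, ENNReal.ofReal_inv_of_pos (by norm_num)]; simp
    rw [hhalf] at h1 h2
    simp only [lint_unif_one]
    rw [h3, ← h1, ← h2]
    rw [← mul_add, ← mul_add]
    rw [← mul_assoc 2, ENNReal.mul_inv_cancel (by simp) (by simp), one_mul, add_comm]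
    congr 2
    · refine congrArg _ (funext fun t => ?_); congr 1; ring
    · refine congrArg _ (funext fun t => ?_); congr 1; ring
  rw [add_assoc, ← mul_add, e1, e2, ← mul_assoc, ← add_mul, mul_comm _ 2, base_key r c hr hc,
    one_mul]

lemma base_snd (r c : ℝ) (hr : 0 < r) (hc : c ∈ Set.Icc r (2 * r)) (φ : ℝ → ENNReal)
    (hφ : Measurable φ) :
    ENNReal.ofReal (c / r - 1) * ∫⁻ t, φ ((c - r) * t) ∂(unif 1) +
    ENNReal.ofReal (1 - c / (2 * r)) *
      (∫⁻ t, φ ((c / 2 - r) * t + c / 2) ∂(unif 1)) +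
    ENNReal.ofReal (1 - c / (2 * r)) *
      (∫⁻ t, φ ((c / 2 - r) * t - c / 2) ∂(unif 1)) = ∫⁻ t, φ (r * t) ∂(unif 1) := by
  have h1 : 1 ≤ c / r := by rw [le_div_iff₀ hr]; linarith [hc.1]
  have h2 : c / (2 * r) ≤ 1 := by rw [div_le_iff₀ (by linarith)]; linarith [hc.2]
  have h2' : c / r ≤ 2 := by rw [div_le_iff₀ (by linarith)]; linarith [hc.2]
  set ψ : ℝ → ENNReal := fun x => φ (r * x) with hψ
  have hm : Measurable ψ := by fun_prop
  have k1 := aux_L (c / r - 1) 0 (-1) 1 (by linarith) ψ (by norm_num) hm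
  have k2 := aux_L' (1 - c / (2 * r)) (c / (2 * r)) (-1) 1 (by linarith) ψ (by norm_num) hm
  have k3 := aux_L' (1 - c / (2 * r)) (-(c / (2 * r))) (-1) 1 (by linarith) ψ (by norm_num) hm
  have g1 := aux_glue (-1) (-(c / r - 1)) 1 (by linarith) (by linarith) ψ
  have g2 := aux_glue (-(c / r - 1)) (c / r - 1) 1 (by linarith) (by linarith) ψ
  have hc2 : c / (2 * r) = c / r / 2 := by field_simp
  rw [show (c / r - 1) * -1 + 0 = -(c / r - 1) by ring,
    show (c / r - 1) * 1 + 0 = (c / r - 1) by ring] at k1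
  rw [show -(1 - c / (2 * r)) * 1 + c / (2 * r) = c / r - 1 by rw [hc2]; ring,
    show -(1 - c / (2 * r)) * -1 + c / (2 * r) = 1 by rw [hc2]; ring] at k2
  rw [show -(1 - c / (2 * r)) * 1 + -(c / (2 * r)) = -1 by rw [hc2]; ring,
    show -(1 - c / (2 * r)) * -1 + -(c / (2 * r)) = -(c / r - 1) by rw [hc2]; ring] at k3
  simp only [lint_unif_one]
  change _ = 2⁻¹ * ∫⁻ t in Set.Icc (-1) 1, ψ t
  rw [g1, g2, ← k1, ← k2, ← k3]
  have f1 : ∀ t, φ ((c - r) * t) = ψ ((c / r - 1) * t + 0) := fun t => by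
    simp only [hψ]; congr 1; field_simp; ring
  have f2 : ∀ t, φ ((c / 2 - r) * t + c / 2) = ψ (-(1 - c / (2 * r)) * t + c / (2 * r)) :=
    fun t => by simp only [hψ]; congr 1; field_simp; ring
  have f3 : ∀ t, φ ((c / 2 - r) * t - c / 2) = ψ (-(1 - c / (2 * r)) * t + -(c / (2 * r))) :=
    fun t => by simp only [hψ]; congr 1; field_simp; ring
  simp only [f1, f2, f3]
  ring

lemma rep_base (r : ℝ) (hr : 0 < r) (ρ : Measure ℝ) [IsFiniteMeasure ρ]
    (hρ : ∀ᵐ c ∂ρ, c ∈ Set.Icc r (2 * r)) : URep r ρ := by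
  have w1 : Measurable fun c : ℝ => ENNReal.ofReal (c / r - 1) := by fun_prop
  have w2 : Measurable fun c : ℝ => ENNReal.ofReal (1 - c / (2 * r)) := by fun_prop
  obtain ⟨N, key⟩ : ∃ N : Measure (ℝ × ℝ), ∀ ψ : ℝ × ℝ → ENNReal, Measurable ψ →
    ∫⁻ p, ψ p ∂N =
    ∫⁻ c, (ENNReal.ofReal (c / r - 1) * ∫⁻ t, ψ (r * t, (c - r) * t) ∂(unif 1) +
      ENNReal.ofReal (1 - c / (2 * r)) *
        (∫⁻ t, ψ (r * t, (c / 2 - r) * t + c / 2) ∂(unif 1)) +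
      ENNReal.ofReal (1 - c / (2 * r)) *
        (∫⁻ t, ψ (r * t, (c / 2 - r) * t - c / 2) ∂(unif 1))) ∂ρ := by
    refine ⟨(((ρ.withDensity fun c => ENNReal.ofReal (c / r - 1)).prod (unif 1)).map
        (fun p : ℝ × ℝ => (r * p.2, (p.1 - r) * p.2)) +
      ((ρ.withDensity fun c => ENNReal.ofReal (1 - c / (2 * r))).prod (unif 1)).map
        (fun p : ℝ × ℝ => (r * p.2, (p.1 / 2 - r) * p.2 + p.1 / 2)) +
      ((ρ.withDensity fun c => ENNReal.ofReal (1 - c / (2 * r))).prod (unif 1)).map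
        (fun p : ℝ × ℝ => (r * p.2, (p.1 / 2 - r) * p.2 - p.1 / 2))), ?_⟩
    intro ψ hψ
    have m1 : Measurable fun c : ℝ => ∫⁻ t, ψ (r * t, (c - r) * t) ∂(unif 1) :=
      Measurable.lintegral_prod_right (by fun_prop)
    have m2 : Measurable fun c : ℝ => ∫⁻ t, ψ (r * t, (c / 2 - r) * t + c / 2) ∂(unif 1) :=
      Measurable.lintegral_prod_right (by fun_prop)
    have m3 : Measurable fun c : ℝ => ∫⁻ t, ψ (r * t, (c / 2 - r) * t - c / 2) ∂(unif 1) :=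
      Measurable.lintegral_prod_right (by fun_prop)
    rw [lintegral_add_measure, lintegral_add_measure, lintegral_map hψ (by fun_prop),
      lintegral_map hψ (by fun_prop), lintegral_map hψ (by fun_prop),
      lintegral_prod _ (by fun_prop), lintegral_prod _ (by fun_prop),
      lintegral_prod _ (by fun_prop),
      lintegral_withDensity_eq_lintegral_mul _ w1 m1,
      lintegral_withDensity_eq_lintegral_mul _ w2 m2,
      lintegral_withDensity_eq_lintegral_mul _ w2 m3]
    symm
    exact (lintegral_add_left ((w1.mul m1).add (w2.mul m2)) _).trans
      (congrArg (· + _) (lintegral_add_left (w1.mul m1) _))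
  refine ⟨N, Measure.ext_of_lintegral _ fun φ hφ => ?_, Measure.ext_of_lintegral _ fun φ hφ => ?_,
    Measure.ext_of_lintegral _ fun φ hφ => ?_⟩
  · rw [lintegral_map hφ (by fun_prop), key _ (by fun_prop), lintegral_smul_measure,
      unif_eq_map r hr, lintegral_map hφ (by fun_prop), smul_eq_mul, mul_comm (ρ Set.univ), ← lintegral_const]
    refine lintegral_congr_ae ?_
    filter_upwards [hρ] with c hc
    rw [← add_mul, ← add_mul, add_assoc, ← two_mul, base_key r c hr hc, one_mul]
  · rw [lintegral_map hφ (by fun_prop), key _ (by fun_prop), lintegral_smul_measure,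
      unif_eq_map r hr, lintegral_map hφ (by fun_prop), smul_eq_mul, mul_comm (ρ Set.univ), ← lintegral_const]
    refine lintegral_congr_ae ?_
    filter_upwards [hρ] with c hc
    exact base_snd r c hr hc φ hφ
  · rw [lintegral_map hφ (by fun_prop), key _ (by fun_prop), lint_mixU _ _ hφ]
    refine lintegral_congr_ae ?_
    filter_upwards [hρ] with c hc
    exact base_sum r c hr hc φ hφ

lemma unif_double (r : ℝ) (hr : 0 < r) (φ : ℝ → ENNReal) (hφ : Measurable φ) :
    2⁻¹ * ∫⁻ t, φ (t + r) ∂(unif r) + 2⁻¹ * ∫⁻ t, φ (t - r) ∂(unif r) =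
      ∫⁻ t, φ t ∂(unif (2 * r)) := by
  have k1 := aux_L 1 r (-r) r (by norm_num) φ (by linarith) hφ
  have k2 := aux_L 1 (-r) (-r) r (by norm_num) φ (by linarith) hφ
  have g1 := aux_glue (-(2 * r)) 0 (2 * r) (by linarith) (by linarith) φ
  simp only [ENNReal.ofReal_one, one_mul] at k1 k2
  rw [show -r + r = 0 by ring, show r + r = 2 * r by ring] at k1
  rw [show -r + -r = -(2 * r) by ring, show r + -r = 0 by ring] at k2
  simp only [unif, lintegral_smul_measure, smul_eq_mul, sub_eq_add_neg]
  rw [k1, k2, g1, ENNReal.ofReal_mul (p := 2) (q := 2 * r) (by norm_num),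
    ENNReal.mul_inv (by simp) (by simp)]
  simp only [ENNReal.ofReal_ofNat]
  ring

lemma rep_double (r : ℝ) (hr : 0 < r) (ρ : Measure ℝ) (h : URep r ρ) : URep (2 * r) ρ := by
  obtain ⟨ν, h1, h2, h3⟩ := h
  obtain ⟨N, key⟩ : ∃ N : Measure (ℝ × ℝ), ∀ ψ : ℝ × ℝ → ENNReal, Measurable ψ →
      ∫⁻ p, ψ p ∂N =
      2⁻¹ * ∫⁻ p, ψ (p.1 + r, p.2 - r) ∂ν + 2⁻¹ * ∫⁻ p, ψ (p.1 - r, p.2 + r) ∂ν := by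
    refine ⟨((2⁻¹ : ENNReal) • ν.map (fun p : ℝ × ℝ => (p.1 + r, p.2 - r)) +
        (2⁻¹ : ENNReal) • ν.map (fun p : ℝ × ℝ => (p.1 - r, p.2 + r))), ?_⟩
    intro ψ hψ
    rw [lintegral_add_measure, lintegral_smul_measure, lintegral_smul_measure,
      lintegral_map hψ (by fun_prop), lintegral_map hψ (by fun_prop)]
    rfl
  refine ⟨N, Measure.ext_of_lintegral _ fun φ hφ => ?_, Measure.ext_of_lintegral _ fun φ hφ => ?_,
    Measure.ext_of_lintegral _ fun φ hφ => ?_⟩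
  · rw [lintegral_map hφ (by fun_prop), key _ (by fun_prop), lintegral_smul_measure,
      ← unif_double r hr φ hφ]
    have a1 := lintegral_map (μ := ν) (f := fun t => φ (t + r)) (by fun_prop) measurable_fst
    have a2 := lintegral_map (μ := ν) (f := fun t => φ (t - r)) (by fun_prop) measurable_fst
    rw [h1, lintegral_smul_measure, smul_eq_mul] at a1 a2
    simp only
    rw [← a1, ← a2, smul_eq_mul]; ring
  · rw [lintegral_map hφ (by fun_prop), key _ (by fun_prop), lintegral_smul_measure,
      ← unif_double r hr φ hφ]
    have a1 := lintegral_map (μ := ν) (f := fun t => φ (t + r)) (by fun_prop) measurable_snd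
    have a2 := lintegral_map (μ := ν) (f := fun t => φ (t - r)) (by fun_prop) measurable_snd
    rw [h2, lintegral_smul_measure, smul_eq_mul] at a1 a2
    simp only
    rw [← a1, ← a2, smul_eq_mul]; ring
  · rw [lintegral_map hφ (by fun_prop), key _ (by fun_prop), ← h3, 
      lintegral_map hφ (by fun_prop)]
    simp only [show ∀ p : ℝ × ℝ, p.1 + r + (p.2 - r) = p.1 + p.2 from fun p => by ring,
      show ∀ p : ℝ × ℝ, p.1 - r + (p.2 + r) = p.1 + p.2 from fun p => by ring]
    rw [← add_mul, ENNReal.inv_two_add_inv_two, one_mul]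

lemma rep_pow (a : ℝ) (ha : 0 < a) (n : ℕ) (ρ : Measure ℝ) [IsFiniteMeasure ρ]
    (hρ : ∀ᵐ c ∂ρ, c ∈ Set.Icc (a / 2 ^ n) (2 * (a / 2 ^ n))) : URep a ρ := by
  have : ∀ k : ℕ, URep (2 ^ k * (a / 2 ^ n)) ρ := by
    intro k
    induction k with
    | zero => simpa using rep_base _ (by positivity) ρ hρ
    | succ k ih =>
      have := rep_double _ (by positivity) ρ ih
      rwa [← mul_assoc, ← pow_succ'] at this
  have := this n
  rwa [mul_div_cancel₀ _ (by positivity)] at this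

lemma rep_zero (a : ℝ) (ha : 0 < a) (ρ : Measure ℝ) [IsFiniteMeasure ρ]
    (hρ : ∀ᵐ c ∂ρ, c = 0) : URep a ρ := by
  refine ⟨ρ Set.univ • (unif a).map (fun t => (t, -t)), ?_, ?_, ?_⟩
  · rw [Measure.map_smul, Measure.map_map (by fun_prop) (by fun_prop)]
    simp [Function.comp_def]
  · rw [Measure.map_smul, Measure.map_map (by fun_prop) (by fun_prop)]
    congr 1
    refine Measure.ext_of_lintegral _ fun φ hφ => ?_
    rw [lintegral_map hφ (by fun_prop)]
    have := aux_L' 1 0 (-a) a (by norm_num) φ (by linarith) hφ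
    simp at this
    simp [unif, lintegral_smul_measure, this]
  · refine Measure.ext_of_lintegral _ fun φ hφ => ?_
    rw [lint_mixU _ _ hφ, Measure.map_smul, Measure.map_map (by fun_prop) (by fun_prop),
      lintegral_smul_measure, lintegral_map hφ (by fun_prop)]
    have : ∫⁻ c, ∫⁻ t, φ (c * t) ∂(unif 1) ∂ρ = ∫⁻ c, φ 0 ∂ρ := by
      refine lintegral_congr_ae ?_
      filter_upwards [hρ] with c hc
      simp [hc]
    rw [this, unif_eq_map a ha, lintegral_map (by fun_prop) (by fun_prop)]
    simp [mul_comm]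

lemma rep_sum (a : ℝ) (ρ : ℕ → Measure ℝ) [∀ n, IsFiniteMeasure (ρ n)]
    (h : ∀ n, URep a (ρ n)) : URep a (Measure.sum ρ) := by
  choose ν h1 h2 h3 using h
  refine ⟨Measure.sum ν, ?_, ?_, ?_⟩
  · rw [Measure.map_sum (by fun_prop)]
    ext s hs
    simp [h1, Measure.sum_apply _ hs, ENNReal.tsum_mul_right]
  · rw [Measure.map_sum (by fun_prop)]
    ext s hs
    simp [h2, Measure.sum_apply _ hs, ENNReal.tsum_mul_right]
  · rw [Measure.map_sum (by fun_prop)]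
    refine Measure.ext_of_lintegral _ fun φ hφ => ?_
    rw [lint_mixU _ _ hφ, lintegral_sum_measure, lintegral_sum_measure]
    simp only [h3]
    exact tsum_congr fun n => lint_mixU _ _ hφ

lemma rep_all (a : ℝ) (ha : 0 < a) (ρ : Measure ℝ) [IsFiniteMeasure ρ]
    (hρ : ∀ᵐ c ∂ρ, c ∈ Set.Icc 0 (2 * a)) : URep a ρ := by
  let S : ℕ → Set ℝ := fun n => match n with
    | 0 => {0}
    | n + 1 => Set.Ioc (a / 2 ^ n) (2 * (a / 2 ^ n))
  have hSm : ∀ n, MeasurableSet (S n) := by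
    intro n
    cases n with
    | zero => exact measurableSet_singleton _
    | succ n => exact measurableSet_Ioc
  have hanti : ∀ m n : ℕ, m < n → 2 * (a / 2 ^ n) ≤ a / 2 ^ m := by
    intro m n hmn
    rw [mul_div_assoc', div_le_div_iff₀ (by positivity) (by positivity)]
    have : (2 : ℝ) ^ (m + 1) ≤ 2 ^ n := pow_le_pow_right₀ (by norm_num) hmn
    rw [pow_succ] at this
    nlinarith
  have hd : ∀ m n, m < n → Disjoint (S m) (S n) := by
    intro m n hmn
    rw [Set.disjoint_left]
    intro x hx hy
    cases n with
    | zero => omega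
    | succ n =>
      have hy' : x ∈ Set.Ioc (a / 2 ^ n) (2 * (a / 2 ^ n)) := hy
      cases m with
      | zero =>
        have hx' : x = 0 := hx
        have : 0 < a / 2 ^ n := by positivity
        linarith [hy'.1]
      | succ m =>
        have hx' : x ∈ Set.Ioc (a / 2 ^ m) (2 * (a / 2 ^ m)) := hx
        linarith [hanti m n (by omega), hx'.1, hy'.2]
  have hd' : Pairwise (Function.onFun Disjoint S) := by
    intro m n hmn
    rcases lt_or_gt_of_ne hmn with h | h
    · exact hd _ _ h
    · exact (hd _ _ h).symm
  have hcov : Set.Icc 0 (2 * a) ⊆ ⋃ n, S n := by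
    intro x hx
    rw [Set.mem_iUnion]
    rcases hx.1.eq_or_lt with h | h
    · exact ⟨0, h.symm⟩
    · have hex : ∃ n : ℕ, a / 2 ^ n < x := by
        obtain ⟨n, hn⟩ := exists_pow_lt_of_lt_one (show 0 < x / a by positivity)
          (show (1 / 2 : ℝ) < 1 by norm_num)
        refine ⟨n, ?_⟩
        rw [lt_div_iff₀ ha, div_pow, one_pow] at hn
        rw [div_eq_mul_one_div, mul_comm]; exact hn
      classical
      refine ⟨Nat.find hex + 1, Nat.find_spec hex, ?_⟩
      rcases Nat.eq_zero_or_pos (Nat.find hex) with h0 | h0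
      · rw [h0]; simpa using hx.2
      · have := Nat.find_min hex (Nat.sub_lt h0 one_pos)
        rw [not_lt] at this
        refine this.trans (le_of_eq ?_)
        obtain ⟨k, hk⟩ := Nat.exists_eq_add_of_lt h0
        rw [hk]
        simp [pow_succ]
        field_simp
  have e : ρ = Measure.sum fun n => ρ.restrict (S n) := by
    rw [← Measure.restrict_iUnion hd' hSm, Measure.restrict_eq_self_of_ae_mem]
    filter_upwards [hρ] with c hc using hcov hc
  rw [e]
  refine rep_sum _ _ fun n => ?_
  cases n with
  | zero =>
    refine rep_zero a ha _ ?_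
    exact ae_restrict_mem (hSm 0)
  | succ n =>
    refine rep_pow a ha n _ ?_
    filter_upwards [ae_restrict_mem (hSm (n + 1))] with c hc
    exact Set.Ioc_subset_Icc_self hc

open Set in
lemma exists_dens (a : ℝ) (ha : 0 < a) (μ : Measure ℝ) [IsProbabilityMeasure μ]
    (hsupp : μ (Set.Icc (-(2 * a)) (2 * a))ᶜ = 0)
    (hconc : ConcaveOn ℝ (Set.Ici 0) fun x => (μ (Set.Iic x)).toReal) :
    ∃ f : ℝ → ℝ, Measurable f ∧ AntitoneOn f (Ioi 0) ∧ (∀ x, 2 * a ≤ x → f x = 0) ∧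
      μ.restrict (Ioi 0) = (volume.restrict (Ioi 0)).withDensity (fun x => ENNReal.ofReal (f x)) := by
  set F : ℝ → ℝ := fun x => (μ (Set.Iic x)).toReal with hF
  have hFc : F = ProbabilityTheory.cdf μ := by
    ext x; rw [ProbabilityTheory.cdf_eq_real]; rfl
  have hmono : Monotone F := by rw [hFc]; exact ProbabilityTheory.monotone_cdf μ
  have hint : interior (Ici (0 : ℝ)) = Ioi 0 := interior_Ici
  have hder : ∀ x ∈ Ioi (0 : ℝ), HasDerivWithinAt F (derivWithin F (Ioi x) x) (Ioi x) x := by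
    intro x hx
    have := (hconc.neg.hasDerivWithinAt_rightDeriv_of_mem_interior (by rwa [hint])).neg
    simp only [neg_neg] at this
    have h2 := this.differentiableWithinAt
    exact h2.hasDerivWithinAt
  have hnn : ∀ x, 0 ≤ derivWithin F (Ioi x) x := fun x => (hmono.monotoneOn _).derivWithin_nonneg
  have hcont : ContinuousOn F (Ici 0) := by
    intro x hx
    rcases (mem_Ici.1 hx).eq_or_lt with rfl | h
    · rw [hFc]; exact (ProbabilityTheory.cdf μ).right_continuous 0
    · have := hconc.continuousOn_interior
      rw [hint] at this
      exact ((this x h).continuousAt (Ioi_mem_nhds h)).continuousWithinAt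
  refine ⟨fun x => derivWithin F (Ioi x) x, measurable_derivWithin_Ioi F, ?_, ?_, ?_⟩
  · have := hconc.neg.monotoneOn_rightDeriv
    rw [hint] at this
    intro x hx y hy hxy
    have h := this hx hy hxy
    simp only [derivWithin.neg] at h
    simpa using h
  · intro x hx
    have : ∀ y, 2 * a ≤ y → F y = 1 := by
      intro y hy
      have : μ (Iic y)ᶜ = 0 := measure_mono_null (by
        intro z hz hz2
        exact hz (hz2.2.trans hy)) hsupp
      simp only [hF]
      rw [(prob_compl_eq_zero_iff measurableSet_Iic).1 this]; simp
    have h : HasDerivWithinAt F 0 (Ioi x) x :=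
      (hasDerivWithinAt_const x (Ioi x) (1 : ℝ)).congr
        (fun y hy => this y (hx.trans (le_of_lt hy))) (this x hx)
    exact h.derivWithin (uniqueDiffWithinAt_Ioi x)
  · refine Measure.ext_of_Ioc _ _ fun u v huv => ?_
    rw [withDensity_apply _ measurableSet_Ioc, Measure.restrict_apply measurableSet_Ioc,
      Measure.restrict_restrict measurableSet_Ioc]
    have e : Ioc u v ∩ Ioi 0 = Ioc (max u 0) v := by
      ext z; simp only [mem_inter_iff, mem_Ioc, mem_Ioi, max_lt_iff]; tauto
    rw [e]
    set w := max u 0 with hw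
    have hw0 : 0 ≤ w := le_max_right _ _
    rcases le_or_gt v w with h | h
    · simp [Ioc_eq_empty (not_lt.2 h)]
    · have hc : ContinuousOn F (Icc w v) := hcont.mono fun z hz => hw0.trans hz.1
      have hd : ∀ x ∈ Ioo w v, HasDerivWithinAt F (derivWithin F (Ioi x) x) (Ioi x) x :=
        fun x hx => hder x (lt_of_le_of_lt hw0 hx.1)
      have hi := intervalIntegral.integrableOn_deriv_right_of_nonneg hc hd (fun x _ => hnn x)
      have := intervalIntegral.integral_eq_sub_of_hasDeriv_right_of_le h.le hc hd
        ((intervalIntegrable_iff_integrableOn_Ioc_of_le h.le).2 hi)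
      rw [← ofReal_integral_eq_lintegral_ofReal hi (ae_of_all _ hnn),
        ← intervalIntegral.integral_of_le h.le, this]
      conv_lhs => rw [← ProbabilityTheory.measure_cdf μ]
      rw [StieltjesFunction.measure_Ioc, hFc]

open Set in
/-- a lower set in `(0,∞)` of finite measure is an interval a.e. -/
lemma lower_set (S : Set ℝ) (hS0 : S ⊆ Ioi 0) (hl : ∀ x ∈ S, ∀ y, 0 < y → y ≤ x → y ∈ S)
    (hfin : volume S ≠ ⊤) : S =ᵐ[volume] Icc 0 (volume S).toReal := by
  have h1 : S ⊆ Icc 0 (volume S).toReal := by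
    intro x hx
    have hx0 : 0 < x := hS0 hx
    refine ⟨hx0.le, ?_⟩
    have : Ioc 0 x ⊆ S := fun y hy => hl x hx y hy.1 hy.2
    have := measure_mono (μ := volume) this
    rw [Real.volume_Ioc, sub_zero] at this
    exact (ENNReal.ofReal_le_iff_le_toReal hfin).1 this
  have h2 : Ioo 0 (volume S).toReal ⊆ S := by
    intro x hx
    by_contra hxS
    have : S ⊆ Ioo 0 x := fun y hy => ⟨hS0 hy, by
      by_contra hyx
      exact hxS (hl y hy x hx.1 (not_lt.1 hyx))⟩
    have := measure_mono (μ := volume) this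
    rw [Real.volume_Ioo, sub_zero] at this
    have := ENNReal.toReal_le_of_le_ofReal hx.1.le this
    linarith [hx.2]
  refine Filter.EventuallyLE.antisymm (Filter.Eventually.of_forall h1) ?_
  exact (Ioo_ae_eq_Icc (μ := volume)).symm.le.trans (Filter.Eventually.of_forall h2)

open Set in
lemma exists_mix (a : ℝ) (ha : 0 < a) (μ : Measure ℝ) [IsProbabilityMeasure μ]
    (hsymm : μ.map (fun x => -x) = μ)
    (hsupp : μ (Set.Icc (-(2 * a)) (2 * a))ᶜ = 0)
    (hconc : ConcaveOn ℝ (Set.Ici 0) fun x => (μ (Set.Iic x)).toReal) :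
    ∃ ρ : Measure ℝ, IsProbabilityMeasure ρ ∧ (∀ᵐ c ∂ρ, c ∈ Set.Icc 0 (2 * a)) ∧
      mixU ρ = μ := by
  obtain ⟨f, hfm, hfa, hf0, hf⟩ := exists_dens a ha μ hsupp hconc
  let S : ℝ → Set ℝ := fun h => {x | 0 < x ∧ h < f x}
  have hSset : MeasurableSet {p : ℝ × ℝ | 0 < p.2 ∧ p.1 < f p.2} :=
    (measurableSet_lt measurable_const measurable_snd).inter
      (measurableSet_lt measurable_fst (hfm.comp measurable_snd))
  have hSm : ∀ h, MeasurableSet (S h) := fun h => measurable_prodMk_left hSset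
  have hSsub : ∀ h, 0 < h → S h ⊆ Ioo 0 (2 * a) := by
    intro h hh x hx
    refine ⟨hx.1, ?_⟩
    by_contra hx2
    have := hf0 x (not_lt.1 hx2)
    linarith [hx.2]
  have hSvol : ∀ h, 0 < h → volume (S h) ≤ ENNReal.ofReal (2 * a) := by
    intro h hh
    have := measure_mono (μ := volume) (hSsub h hh)
    rwa [Real.volume_Ioo, sub_zero] at this
  have hSfin : ∀ h, 0 < h → volume (S h) ≠ ⊤ := fun h hh =>
    ne_top_of_le_ne_top ENNReal.ofReal_ne_top (hSvol h hh)
  let c : ℝ → ℝ := fun h => (volume (S h)).toReal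
  have hcm : Measurable c := (measurable_measure_prodMk_left hSset).ennreal_toReal
  have hc0 : ∀ h, 0 ≤ c h := fun h => ENNReal.toReal_nonneg
  have hc2 : ∀ h, 0 < h → c h ≤ 2 * a := fun h hh =>
    ENNReal.toReal_le_of_le_ofReal (by linarith) (hSvol h hh)
  have hSI : ∀ h, 0 < h → S h =ᵐ[volume] Icc 0 (c h) := by
    intro h hh
    refine lower_set (S h) (fun x hx => hx.1) ?_ (hSfin h hh)
    intro x hx y hy hyx
    exact ⟨hy, hx.2.trans_le (hfa hy hx.1 hyx)⟩
  let ρ₁ : Measure ℝ := ((volume.restrict (Ioi 0)).withDensity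
    (fun h => ENNReal.ofReal (2 * c h))).map c
  let ρ : Measure ℝ := ρ₁ + μ {0} • Measure.dirac 0
  -- formula for μ
  have hμ : ∀ φ : ℝ → ENNReal, Measurable φ → ∫⁻ x, φ x ∂μ =
      (∫⁻ x in Ioi 0, ENNReal.ofReal (f x) * (φ x + φ (-x))) + μ {0} * φ 0 := by
    intro φ hφ
    have p1 : ∀ ψ : ℝ → ENNReal, Measurable ψ →
        ∫⁻ x in Ioi 0, ψ x ∂μ = ∫⁻ x in Ioi 0, ENNReal.ofReal (f x) * ψ x := by
      intro ψ hψ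
      rw [hf, lintegral_withDensity_eq_lintegral_mul _ (by fun_prop) hψ]
      rfl
    have p2 : ∫⁻ x in Iio 0, φ x ∂μ = ∫⁻ x in Ioi 0, φ (-x) ∂μ := by
      conv_lhs => rw [← hsymm]
      rw [setLIntegral_map measurableSet_Iio hφ measurable_neg]
      congr 2
      ext x; simp
    have p3 : ∫⁻ x, φ x ∂μ = ∫⁻ x in Iio 0, φ x ∂μ + (∫⁻ x in Ioi 0, φ x ∂μ + μ {0} * φ 0) := by
      rw [← lintegral_add_compl φ (measurableSet_Iio (a := (0 : ℝ))), compl_Iio,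
        ← Ioi_insert, insert_eq, lintegral_union measurableSet_Ioi (by simp)]
      simp only [lintegral_singleton]
      ring
    rw [p3, p2, p1 _ (by fun_prop), p1 _ hφ, ← add_assoc, ← lintegral_add_left (by fun_prop)]
    congr 2
    ext x
    ring
  have hcone : ∀ φ : ℝ → ENNReal, Measurable φ → ∀ h, 0 < h →
      ENNReal.ofReal (2 * c h) * ∫⁻ t, φ (c h * t) ∂(unif 1) =
        ∫⁻ x in S h, (φ x + φ (-x)) := by
    intro φ hφ h hh
    rw [setLIntegral_congr (hSI h hh), lint_unif_one]
    have k1 := aux_L (c h) 0 (-1) 1 (hc0 h) φ (by norm_num) hφ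
    have k2 := aux_L' 1 0 0 (c h) (by norm_num) φ (hc0 h) hφ
    have k3 := aux_glue (-c h) 0 (c h) (by linarith [hc0 h]) (hc0 h) φ
    simp only [add_zero, mul_neg, mul_one, neg_mul, one_mul, mul_zero, neg_zero,
      ENNReal.ofReal_one] at k1 k2
    rw [lintegral_add_left hφ, k2, add_comm, ← k3, ← k1, ← mul_assoc,
      ENNReal.ofReal_mul (by norm_num), mul_right_comm (ENNReal.ofReal 2),
      ENNReal.ofReal_ofNat, ENNReal.mul_inv_cancel (by simp) (by simp), one_mul]
  have hρ1 : ∀ φ : ℝ → ENNReal, Measurable φ →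
      ∫⁻ d, ∫⁻ t, φ (d * t) ∂(unif 1) ∂ρ = ∫⁻ x, φ x ∂μ := by
    intro φ hφ
    have m0 : Measurable fun d : ℝ => ∫⁻ t, φ (d * t) ∂(unif 1) :=
      Measurable.lintegral_prod_right (by fun_prop)
    have m1 : Measurable fun h : ℝ => ∫⁻ t, φ (c h * t) ∂(unif 1) := m0.comp hcm
    rw [hμ φ hφ, lintegral_add_measure, lintegral_smul_measure, lintegral_dirac' _ m0,
      lintegral_map m0 hcm, lintegral_withDensity_eq_lintegral_mul _ (by fun_prop) m1]
    simp only [zero_mul, lintegral_const, measure_univ, mul_one, smul_eq_mul]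
    congr 1
    calc _ = ∫⁻ h in Ioi 0, ∫⁻ x in S h, (φ x + φ (-x)) := by
          refine setLIntegral_congr_fun measurableSet_Ioi fun h hh => ?_
          exact hcone φ hφ h hh
      _ = ∫⁻ h in Ioi 0, ∫⁻ x, {p : ℝ × ℝ | 0 < p.2 ∧ p.1 < f p.2}.indicator
            (fun p => φ p.2 + φ (-p.2)) (h, x) := by
          refine lintegral_congr fun h => ?_
          rw [← lintegral_indicator (hSm h)]
          rfl
      _ = ∫⁻ x, ∫⁻ h in Ioi 0, {p : ℝ × ℝ | 0 < p.2 ∧ p.1 < f p.2}.indicator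
            (fun p => φ p.2 + φ (-p.2)) (h, x) := by
          refine lintegral_lintegral_swap ?_
          exact (Measurable.indicator (by fun_prop) hSset).aemeasurable
      _ = ∫⁻ x, (Ioi 0).indicator (fun x => ENNReal.ofReal (f x) * (φ x + φ (-x))) x := by
          refine lintegral_congr fun x => ?_
          by_cases hx : 0 < x
          · rw [indicator_of_mem (by exact hx)]
            have : ∀ h, {p : ℝ × ℝ | 0 < p.2 ∧ p.1 < f p.2}.indicator
              (fun p => φ p.2 + φ (-p.2)) (h, x) =
              (Iio (f x)).indicator (fun _ => φ x + φ (-x)) h := by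
              intro h
              simp [indicator, hx]
            simp only [this]
            rw [lintegral_indicator measurableSet_Iio, lintegral_const,
              Measure.restrict_apply_univ, Measure.restrict_apply measurableSet_Iio,
              Iio_inter_Ioi, Real.volume_Ioo, sub_zero, mul_comm]
          · rw [indicator_of_notMem (by exact hx)]
            simp [indicator, hx]
      _ = _ := lintegral_indicator measurableSet_Ioi _
  have hprob : IsProbabilityMeasure ρ := by
    constructor
    have := hρ1 (fun _ => 1) measurable_const
    simpa using this
  refine ⟨ρ, hprob, ?_, ?_⟩
  · rw [ae_add_measure_iff]
    constructor
    · refine (ae_map_iff hcm.aemeasurable measurableSet_Icc).2 ?_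
      refine (withDensity_absolutelyContinuous _ _).ae_le ?_
      filter_upwards [ae_restrict_mem measurableSet_Ioi] with h hh
      exact ⟨hc0 h, hc2 h hh⟩
    · refine Measure.ae_smul_measure ?_ _
      refine (ae_dirac_iff measurableSet_Icc).2 ?_
      exact ⟨le_rfl, by linarith⟩
  · refine Measure.ext_of_lintegral _ fun φ hφ => ?_
    rw [lint_mixU _ _ hφ, hρ1 φ hφ]

/-- Every symmetric unimodal probability distribution supported in `[-2a, 2a]`
(symmetric about 0, with CDF convex on `(-∞,0]` and concave on `[0,∞)`) is the
distribution of `U₁ + U₂` for some pair of random variables each uniform on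
`[-a, a]` with a suitable joint dependence. -/
theorem stmt17 (a : ℝ) (ha : 0 < a) (μ : Measure ℝ) [IsProbabilityMeasure μ]
    (hsymm : μ.map (fun x => -x) = μ)
    (hsupp : μ (Set.Icc (-(2 * a)) (2 * a))ᶜ = 0)
    (hconv : ConvexOn ℝ (Set.Iic 0) fun x => (μ (Set.Iic x)).toReal)
    (hconc : ConcaveOn ℝ (Set.Ici 0) fun x => (μ (Set.Iic x)).toReal) :
    ∃ ν : Measure (ℝ × ℝ), IsProbabilityMeasure ν ∧
      ν.map Prod.fst = unif a ∧ ν.map Prod.snd = unif a ∧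
      ν.map (fun p => p.1 + p.2) = μ := by

  obtain ⟨ρ, hp, hρ, hmix⟩ := exists_mix a ha μ hsymm hsupp hconc
  obtain ⟨ν, h1, h2, h3⟩ := rep_all a ha ρ hρ
  rw [hmix] at h3
  rw [measure_univ, one_smul] at h1 h2
  refine ⟨ν, ⟨?_⟩, h1, h2, h3⟩
  have : (ν.map (fun p => p.1 + p.2)) Set.univ = 1 := by rw [h3]; exact measure_univ
  rwa [Measure.map_apply (by fun_prop) MeasurableSet.univ] at this
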